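/- Let H be the completion of C_c^∞(R^N) under the norm (∫ (|∇v|^2 + v^2) e^{-|x|^2/4} dx)^{1/2} and L the completion under (∫ v^2 e^{-|x|^2/4} dx)^{1/2}. Then the embedding H ↪ L is compact: every sequence bounded in H has a subsequence converging strongly in L. -/

import Mathlib

open MeasureTheory Real Set

noncomputable section

/-!
Multiplication by `e^{-a|x|²/2}` turns the weighted `L²` norm into the unweighted one. Expanding
`|∇(e^{-a|x|²/2} u)|²` produces the cross term `-a x · ∇(v²)`, where `v = e^{-a|x|²/2} u`, and
integrating it by parts shows that the weighted energy of `u` controls `∫ |∇v|²` and `∫ |x|² v²`.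
The first bound makes the translates `v(· + h) - v` uniformly small in `L²`, the second one makes
the tails uniformly small. Along a weakly convergent subsequence the averages of `v` over
translates of a fixed small set converge pointwise and boundedly, hence in `L²` of any set of
finite measure, and the two uniform bounds upgrade this to strong convergence of `v`.
-/

open Filter Topology
open scoped ENNReal NNReal

theorem exists_subseq_tendsto_inner {𝕜 H : Type*} [RCLike 𝕜] [NormedAddCommGroup H]
    [InnerProductSpace 𝕜 H] [CompleteSpace H] [TopologicalSpace.SeparableSpace H]
    {x : ℕ → H} {C : ℝ} (hx : ∀ n, ‖x n‖ ≤ C) :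
    ∃ (a : H) (φ : ℕ → ℕ), StrictMono φ ∧
      ∀ y, Tendsto (fun n ↦ inner 𝕜 y (x (φ n))) atTop (𝓝 (inner 𝕜 y a)) := by
  obtain ⟨ℓ, -, φ, hφ, hℓ⟩ := WeakDual.isSeqCompact_closedBall 𝕜 H 0 C
    (x := fun n ↦ StrongDual.toWeakDual (innerSL 𝕜 (x n))) fun n ↦ by simpa using hx n
  refine ⟨(InnerProductSpace.toDual 𝕜 H).symm (WeakDual.toStrongDual ℓ), φ, hφ, fun y ↦ ?_⟩
  have hy : Tendsto (fun n ↦ inner 𝕜 (x (φ n)) y) atTop (𝓝 (ℓ y)) :=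
    ((WeakDual.eval_continuous y).tendsto ℓ).comp hℓ
  rw [← inner_conj_symm, InnerProductSpace.toDual_symm_apply]
  exact ((RCLike.continuous_conj.tendsto _).comp hy).congr fun n ↦ inner_conj_symm ..

section Minkowski

variable {X Y F : Type*} [MeasurableSpace X] [MeasurableSpace Y] [NormedAddCommGroup F]
  {μ : Measure X} {ν : Measure Y} {p c : ℝ≥0∞}

theorem eLpNorm_le_iff_lintegral_rpow_enorm_le {f : X → F} (hp₀ : p ≠ 0) (hp : p ≠ ∞) :
    eLpNorm f p μ ≤ c ↔ ∫⁻ x, ‖f x‖ₑ ^ p.toReal ∂μ ≤ c ^ p.toReal := by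
  rw [eLpNorm_eq_lintegral_rpow_enorm_toReal hp₀ hp, one_div,
    ENNReal.rpow_inv_le_iff (ENNReal.toReal_pos hp₀ hp)]

variable [NormedSpace ℝ F] [IsProbabilityMeasure ν]

theorem enorm_integral_le_eLpNorm {f : Y → F} (hf : AEStronglyMeasurable f ν) (hp : 1 ≤ p) :
    ‖∫ y, f y ∂ν‖ₑ ≤ eLpNorm f p ν :=
  calc ‖∫ y, f y ∂ν‖ₑ ≤ ∫⁻ y, ‖f y‖ₑ ∂ν := enorm_integral_le_lintegral_enorm f
    _ = eLpNorm f 1 ν := eLpNorm_one_eq_lintegral_enorm.symm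
    _ ≤ eLpNorm f p ν := eLpNorm_le_eLpNorm_of_exponent_le hp hf

theorem eLpNorm_integral_le_of_ae_eLpNorm_le [SFinite μ] {k : X → Y → F}
    (hk : AEStronglyMeasurable (Function.uncurry k) (μ.prod ν)) (hp₁ : 1 ≤ p) (hp : p ≠ ∞)
    (hc : ∀ᵐ y ∂ν, eLpNorm (k · y) p μ ≤ c) :
    eLpNorm (fun x ↦ ∫ y, k x y ∂ν) p μ ≤ c := by
  have hp₀ : p ≠ 0 := (zero_lt_one.trans_le hp₁).ne'
  simp only [eLpNorm_le_iff_lintegral_rpow_enorm_le hp₀ hp] at hc ⊢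
  have jensen : ∀ᵐ x ∂μ, ‖∫ y, k x y ∂ν‖ₑ ^ p.toReal ≤ ∫⁻ y, ‖k x y‖ₑ ^ p.toReal ∂ν := by
    filter_upwards [hk.prodMk_left] with x hx
    have := enorm_integral_le_eLpNorm hx hp₁
    rwa [eLpNorm_eq_lintegral_rpow_enorm_toReal hp₀ hp, one_div,
      ENNReal.le_rpow_inv_iff (ENNReal.toReal_pos hp₀ hp)] at this
  calc ∫⁻ x, ‖∫ y, k x y ∂ν‖ₑ ^ p.toReal ∂μ
      ≤ ∫⁻ x, ∫⁻ y, ‖k x y‖ₑ ^ p.toReal ∂ν ∂μ := lintegral_mono_ae jensen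
    _ = ∫⁻ y, ∫⁻ x, ‖k x y‖ₑ ^ p.toReal ∂μ ∂ν :=
      lintegral_lintegral_swap (hk.enorm.pow_const _)
    _ ≤ ∫⁻ _, c ^ p.toReal ∂ν := lintegral_mono_ae hc
    _ = c ^ p.toReal := by simp

end Minkowski

theorem tendsto_eLpNorm_sub_zero_of_norm_le {X F : Type*} [MeasurableSpace X]
    [NormedAddCommGroup F] {μ : Measure X} [IsFiniteMeasure μ] {p : ℝ≥0∞} (hp₁ : 1 ≤ p)
    (hp : p ≠ ∞) {f : ℕ → X → F} {g : X → F} {B : ℝ}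
    (hf : ∀ n, AEStronglyMeasurable (f n) μ) (hg : MemLp g p μ) (hB : ∀ n x, ‖f n x‖ ≤ B)
    (hlim : ∀ x, Tendsto (f · x) atTop (𝓝 (g x))) :
    Tendsto (fun n ↦ eLpNorm (f n - g) p μ) atTop (𝓝 0) := by
  refine tendsto_Lp_finite_of_tendsto_ae hp₁ hp hf hg ?_ (ae_of_all _ hlim)
  refine unifIntegrable_of hp₁ hp hf fun ε _ ↦ ⟨B.toNNReal + 1, fun n ↦ ?_⟩
  have hempty : {x | B.toNNReal + 1 ≤ ‖f n x‖₊} = ∅ := by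
    ext x
    have : ‖f n x‖₊ ≤ B.toNNReal := by simpa [← NNReal.coe_le_coe] using Or.inl (hB n x)
    simpa using this.trans_lt (lt_add_one _)
  simp [hempty]

theorem eLpNorm_sub_indicator_le {X F : Type*} [MeasurableSpace X] [NormedAddCommGroup F]
    {μ : Measure X} {p : ℝ≥0∞} (hp : 1 ≤ p) {f g k : X → F} {s : Set X} (hs : MeasurableSet s)
    (hf : AEStronglyMeasurable f μ) (hg : AEStronglyMeasurable g μ)
    (hk : AEStronglyMeasurable k μ) :
    eLpNorm (f - s.indicator g) p μ ≤
      eLpNorm (sᶜ.indicator f) p μ + eLpNorm (k - f) p μ + eLpNorm (k - g) p (μ.restrict s) := by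
  have hsplit : f - s.indicator g =
      sᶜ.indicator f - s.indicator (k - f) + s.indicator (k - g) := by
    ext x
    by_cases hx : x ∈ s <;> simp [hx]
  rw [hsplit, ← eLpNorm_indicator_eq_eLpNorm_restrict hs]
  refine (eLpNorm_add_le ((hf.indicator hs.compl).sub ((hk.sub hf).indicator hs))
    ((hk.sub hg).indicator hs) hp).trans ?_
  gcongr
  exact (eLpNorm_sub_le (hf.indicator hs.compl) ((hk.sub hf).indicator hs) hp).trans
    (by gcongr; exact eLpNorm_indicator_le _)

theorem cauchySeq_of_forall_exists_eventually_edist_le {X : Type*} [PseudoEMetricSpace X]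
    {u : ℕ → X} (h : ∀ ε > 0, ∃ y, ∀ᶠ n in atTop, edist (u n) y ≤ ε) : CauchySeq u := by
  refine EMetric.cauchySeq_iff'.2 fun ε hε ↦ ?_
  obtain ⟨δ, hδ, hδε⟩ := exists_between hε
  obtain ⟨y, hy⟩ := h (δ / 2) (ENNReal.half_pos hδ.ne')
  obtain ⟨N, hN⟩ := eventually_atTop.1 hy
  refine ⟨N, fun n hn ↦ lt_of_le_of_lt ?_ hδε⟩
  calc edist (u n) (u N) ≤ edist (u n) y + edist (u N) y := edist_triangle_right ..
    _ ≤ δ / 2 + δ / 2 := add_le_add (hN n hn) (hN N le_rfl)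
    _ = δ := ENNReal.add_halves δ

theorem aestronglyMeasurable_comp_add {G Z : Type*} [AddGroup G] [MeasurableSpace G]
    [MeasurableAdd₂ G] [TopologicalSpace Z] {μ : Measure G} [SFinite μ] [μ.IsAddLeftInvariant]
    {f : G → Z} (hf : AEStronglyMeasurable f μ) :
    AEStronglyMeasurable (fun z : G × G ↦ f (z.1 + z.2)) (μ.prod μ) :=
  hf.comp_quasiMeasurePreserving <|
    Measure.quasiMeasurePreserving_snd.comp
      (measurePreserving_prod_add μ μ).quasiMeasurePreserving

section LocalAverage

variable {G F : Type*} [AddGroup G] [MeasurableSpace G] [NormedAddCommGroup F] [NormedSpace ℝ F]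

/-- The average of `f` over the translate `x + K`, with respect to `μ`. -/
def localAverage (μ : Measure G) (K : Set G) (f : G → F) (x : G) : F :=
  ⨍ h in K, f (x + h) ∂μ

variable [MeasurableAdd₂ G] {μ : Measure G} [μ.IsAddLeftInvariant] [SFinite μ] {K : Set G}
  {f : G → F}

theorem aestronglyMeasurable_localAverage (hf : AEStronglyMeasurable f μ) :
    AEStronglyMeasurable (localAverage μ K f) μ :=
  have hK : (μ.restrict K univ)⁻¹ • μ.restrict K ≪ μ :=
    Measure.smul_absolutelyContinuous.trans Measure.absolutelyContinuous_restrict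
  ((aestronglyMeasurable_comp_add hf).mono_ac
    (Measure.AbsolutelyContinuous.rfl.prod hK)).integral_prod_right'

theorem eLpNorm_localAverage_sub_le [CompleteSpace F] {p c : ℝ≥0∞} (hp₁ : 1 ≤ p) (hp : p ≠ ∞)
    (hf : MemLp f p μ) (hK : MeasurableSet K) (hK₀ : μ K ≠ 0) (hK' : μ K ≠ ∞)
    (hc : ∀ h ∈ K, eLpNorm (fun x ↦ f (x + h) - f x) p μ ≤ c) :
    eLpNorm (localAverage μ K f - f) p μ ≤ c := by
  have : Fact (μ K < ∞) := ⟨hK'.lt_top⟩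
  have : NeZero (μ.restrict K) := ⟨by simpa using hK₀⟩
  let ν : Measure G := (μ.restrict K univ)⁻¹ • μ.restrict K
  have hν : ν ≪ μ :=
    Measure.smul_absolutelyContinuous.trans Measure.absolutelyContinuous_restrict
  have hint (x : G) : Integrable (fun h ↦ f (x + h)) ν :=
    (((hf.comp_measurePreserving (measurePreserving_add_left μ x)).restrict K).integrable
      hp₁).to_average
  have havg : localAverage μ K f - f = fun x ↦ ∫ h, (f (x + h) - f x) ∂ν := by
    ext x
    rw [integral_sub (hint x) (integrable_const _), integral_const, probReal_univ, one_smul]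
    rfl
  rw [havg]
  refine eLpNorm_integral_le_of_ae_eLpNorm_le ?_ hp₁ hp ?_
  · exact ((aestronglyMeasurable_comp_add hf.1).sub hf.1.comp_fst).mono_ac
      (Measure.AbsolutelyContinuous.rfl.prod hν)
  · exact Measure.ae_smul_measure (ae_restrict_of_forall_mem hK hc) _

end LocalAverage

section L2

variable {G 𝕜 : Type*} [AddGroup G] [MeasurableSpace G] [MeasurableAdd₂ G] [RCLike 𝕜]
  {μ : Measure G} [μ.IsAddLeftInvariant] {K : Set G}

variable (𝕜) in
theorem exists_localAverage_eq_inner (hK : MeasurableSet K) (hK' : μ K ≠ ∞) (x : G) :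
    ∃ g : Lp 𝕜 2 μ, ‖g‖ ≤ (μ.real K)⁻¹ * √(μ.real K) ∧ ∀ (f : G → 𝕜) (hf : MemLp f 2 μ),
      localAverage μ K f x = inner 𝕜 g hf.toLp := by
  have hmp : MeasurePreserving (-x + ·) μ μ := measurePreserving_add_left μ (-x)
  have hKx : MeasurableSet ((-x + ·) ⁻¹' K) := hmp.measurable hK
  have hμKx : μ ((-x + ·) ⁻¹' K) = μ K := measure_preimage_add μ (-x) K
  refine ⟨((μ.real K)⁻¹ : 𝕜) • indicatorConstLp 2 hKx (hμKx ▸ hK') 1, ?_, fun f hf ↦ ?_⟩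
  · rw [norm_smul, norm_indicatorConstLp two_ne_zero ENNReal.ofNat_ne_top]
    simp [measureReal_def, hμKx, Real.sqrt_eq_rpow]
  · have htranslate : ∫ h in K, f (x + h) ∂μ = ∫ y in (-x + ·) ⁻¹' K, f y ∂μ := by
      simpa using (hmp.setIntegral_preimage_emb (measurableEmbedding_addLeft (-x))
        (fun h ↦ f (x + h)) K).symm
    rw [localAverage, setAverage_eq, htranslate, inner_smul_left, L2.inner_indicatorConstLp_one,
      setIntegral_congr_ae hKx (hf.coeFn_toLp.mono fun _ h _ ↦ h), RCLike.real_smul_eq_coe_mul]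
    simp

theorem norm_localAverage_le (hK : MeasurableSet K) (hK' : μ K ≠ ∞) {f : G → 𝕜}
    (hf : MemLp f 2 μ) (x : G) :
    ‖localAverage μ K f x‖ ≤ (μ.real K)⁻¹ * √(μ.real K) * ‖hf.toLp‖ := by
  obtain ⟨g, hg, hgf⟩ := exists_localAverage_eq_inner 𝕜 hK hK' x
  rw [hgf f hf]
  exact (norm_inner_le_norm _ _).trans (by gcongr)

variable [SFinite μ]

theorem memLp_localAverage_restrict (hK : MeasurableSet K) (hK' : μ K ≠ ∞) {f : G → 𝕜}
    (hf : MemLp f 2 μ) {s : Set G} (hs : μ s ≠ ∞) :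
    MemLp (localAverage μ K f) 2 (μ.restrict s) :=
  have : Fact (μ s < ∞) := ⟨hs.lt_top⟩
  .of_bound (aestronglyMeasurable_localAverage hf.1).restrict _
    (ae_of_all _ (norm_localAverage_le hK hK' hf))

theorem tendsto_eLpNorm_localAverage_sub_of_tendsto_inner (hK : MeasurableSet K) (hK' : μ K ≠ ∞)
    {f : ℕ → G → 𝕜} (hf : ∀ n, MemLp (f n) 2 μ) {C : ℝ} (hC : ∀ n, ‖(hf n).toLp‖ ≤ C)
    {a : Lp 𝕜 2 μ} (ha : ∀ y, Tendsto (fun n ↦ inner 𝕜 y (hf n).toLp) atTop (𝓝 (inner 𝕜 y a)))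
    {s : Set G} (hs : μ s ≠ ∞) :
    Tendsto (fun n ↦ eLpNorm (localAverage μ K (f n) - localAverage μ K a) 2 (μ.restrict s))
      atTop (𝓝 0) := by
  have : Fact (μ s < ∞) := ⟨hs.lt_top⟩
  refine tendsto_eLpNorm_sub_zero_of_norm_le one_le_two ENNReal.ofNat_ne_top
    (fun n ↦ (aestronglyMeasurable_localAverage (hf n).1).restrict)
    (memLp_localAverage_restrict hK hK' (Lp.memLp a) hs)
    (fun n x ↦ (norm_localAverage_le hK hK' (hf n) x).trans
      (mul_le_mul_of_nonneg_left (hC n) (by positivity)))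
    fun x ↦ ?_
  obtain ⟨g, -, hg⟩ := exists_localAverage_eq_inner 𝕜 hK hK' x
  simpa only [hg _ (hf _), hg _ (Lp.memLp a), Lp.toLp_coeFn] using ha g

end L2

theorem exists_subseq_cauchySeq_of_unifTight {G 𝕜 : Type*} [AddGroup G] [TopologicalSpace G]
    [IsTopologicalAddGroup G] [SecondCountableTopology G] [LocallyCompactSpace G]
    [MeasurableSpace G] [BorelSpace G] [RCLike 𝕜] {μ : Measure G} [μ.IsAddHaarMeasure]
    {f : ℕ → G → 𝕜} (hf : ∀ n, MemLp (f n) 2 μ) {C : ℝ} (hC : ∀ n, ‖(hf n).toLp‖ ≤ C)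
    (htight : UnifTight f 2 μ)
    (htrans : ∀ ε > 0, ∀ᶠ h in 𝓝 0, ∀ n, eLpNorm (fun x ↦ f n (x + h) - f n x) 2 μ ≤ ε) :
    ∃ φ : ℕ → ℕ, StrictMono φ ∧ CauchySeq fun n ↦ (hf (φ n)).toLp := by
  have : Fact ((2 : ℝ≥0∞) ≠ ∞) := ⟨ENNReal.ofNat_ne_top⟩
  obtain ⟨a, φ, hφ, ha⟩ := exists_subseq_tendsto_inner (𝕜 := 𝕜) hC
  refine ⟨φ, hφ, cauchySeq_of_forall_exists_eventually_edist_le fun ε hε ↦ ?_⟩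
  have hε3 : ε / 3 ≠ 0 := (ENNReal.div_pos hε.ne' ENNReal.ofNat_ne_top).ne'
  obtain ⟨s, hs, hμs, hfs⟩ := htight.exists_measurableSet_indicator hε3
  obtain ⟨t, ht, hμt⟩ := μ.finiteAt_nhds 0
  obtain ⟨K, hK, hKo, hK0⟩ := mem_nhds_iff.1 (inter_mem ht (htrans _ hε3.bot_lt))
  have hKm := hKo.measurableSet
  have hμK : μ K ≠ ∞ := ((measure_mono (hK.trans inter_subset_left)).trans_lt hμt).ne
  have hmem := memLp_localAverage_restrict hKm hμK (Lp.memLp a) hμs.ne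
  refine ⟨((memLp_indicator_iff_restrict hs).2 hmem).toLp, ?_⟩
  have hlim := tendsto_eLpNorm_localAverage_sub_of_tendsto_inner hKm hμK (fun n ↦ hf (φ n))
    (fun n ↦ hC (φ n)) ha hμs.ne
  filter_upwards [hlim.eventually_le_const hε3.bot_lt] with n hn
  rw [Lp.edist_toLp_toLp, ← ENNReal.add_thirds ε]
  have hfn := hf (φ n)
  refine (eLpNorm_sub_indicator_le one_le_two hs hfn.1
    (aestronglyMeasurable_localAverage (Lp.aestronglyMeasurable a))
    (aestronglyMeasurable_localAverage (K := K) hfn.1)).trans ?_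
  gcongr
  · exact hfs _
  · exact eLpNorm_localAverage_sub_le one_le_two ENNReal.ofNat_ne_top hfn hKm
      (hKo.measure_ne_zero μ ⟨0, hK0⟩) hμK fun h hh ↦ (hK hh).2 _

theorem eLpNorm_comp_add_right_sub_le {E F : Type*} [NormedAddCommGroup E] [NormedSpace ℝ E]
    [MeasurableSpace E] [BorelSpace E] [SecondCountableTopology E] [NormedAddCommGroup F]
    [NormedSpace ℝ F] [CompleteSpace F] {μ : Measure E} [SFinite μ] [μ.IsAddRightInvariant]
    {p : ℝ≥0∞} (hp₁ : 1 ≤ p) (hp : p ≠ ∞) {f : E → F} (hf : ContDiff ℝ 1 f) (h : E) :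
    eLpNorm (fun x ↦ f (x + h) - f x) p μ ≤ ‖h‖ₑ * eLpNorm (fderiv ℝ f) p μ := by
  have hf' : Continuous (fderiv ℝ f) := hf.continuous_fderiv one_ne_zero
  have : IsProbabilityMeasure (volume.restrict (Ioc (0 : ℝ) 1)) := ⟨by simp⟩
  have ftc (x : E) : f (x + h) - f x = ∫ t in Ioc (0 : ℝ) 1, fderiv ℝ f (x + t • h) h := by
    have hderiv (t : ℝ) :
        HasDerivAt (fun t : ℝ ↦ f (x + t • h)) (fderiv ℝ f (x + t • h) h) t :=
      (hf.differentiable one_ne_zero _).hasFDerivAt.comp_hasDerivAt t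
        (by simpa using ((hasDerivAt_id t).smul_const h).const_add x)
    have hcont : Continuous fun t : ℝ ↦ fderiv ℝ f (x + t • h) h := by fun_prop
    have := intervalIntegral.integral_eq_sub_of_hasDerivAt (a := 0) (b := 1)
      (fun t _ ↦ hderiv t) (hcont.intervalIntegrable _ _)
    simpa [intervalIntegral.integral_of_le zero_le_one] using this.symm
  simp only [ftc]
  have hcont : Continuous fun z : E × ℝ ↦ fderiv ℝ f (z.1 + z.2 • h) h := by fun_prop
  refine eLpNorm_integral_le_of_ae_eLpNorm_le hcont.aestronglyMeasurable hp₁ hp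
    (ae_of_all _ fun t ↦ ?_)
  rw [← eLpNorm_comp_measurePreserving hf'.aestronglyMeasurable
    (measurePreserving_add_right μ (t • h)), ← ofReal_norm h]
  exact eLpNorm_le_mul_eLpNorm_of_ae_le_mul
    (ae_of_all _ fun x ↦ by
      simpa [mul_comm] using (fderiv ℝ f (x + t • h)).le_opNorm h) p

theorem unifTight_of_eLpNorm_norm_smul_le {ι E F : Type*} [NormedAddCommGroup E] [ProperSpace E]
    [MeasurableSpace E] [BorelSpace E] [NormedAddCommGroup F] [NormedSpace ℝ F] {μ : Measure E}
    [IsFiniteMeasureOnCompacts μ] {p : ℝ≥0∞} {f : ι → E → F} {C : ℝ≥0}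
    (hC : ∀ i, eLpNorm (fun x ↦ ‖x‖ • f i x) p μ ≤ C) : UnifTight f p μ := by
  intro ε hε
  set R : ℝ≥0 := C / ε + 1 with hR
  have hRpos : 0 < R := by positivity
  refine ⟨Metric.closedBall 0 R, measure_closedBall_lt_top.ne, fun i ↦ ?_⟩
  have htail (x : E) : ‖(Metric.closedBall 0 R)ᶜ.indicator (f i) x‖₊ ≤ R⁻¹ * ‖‖x‖ • f i x‖₊ := by
    by_cases hx : x ∈ Metric.closedBall (0 : E) R
    · simp [hx]
    · have hRx : R ≤ ‖x‖₊ := by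
        simpa [← NNReal.coe_le_coe] using (lt_of_not_ge (by simpa using hx)).le
      rw [indicator_of_mem hx, nnnorm_smul, nnnorm_norm, ← mul_assoc]
      exact le_mul_of_one_le_left zero_le (by rwa [← div_eq_inv_mul, one_le_div₀ hRpos])
  calc eLpNorm ((Metric.closedBall 0 R)ᶜ.indicator (f i)) p μ
      ≤ (R⁻¹ : ℝ≥0) • eLpNorm (fun x ↦ ‖x‖ • f i x) p μ :=
        eLpNorm_le_nnreal_smul_eLpNorm_of_ae_le_mul (ae_of_all _ htail) p
    _ ≤ (R⁻¹ : ℝ≥0) * C := by rw [ENNReal.smul_def, smul_eq_mul]; gcongr; exact hC i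
    _ ≤ ε := by
      norm_cast
      rw [inv_mul_le_iff₀ hRpos, hR, add_mul, div_mul_cancel₀ _ hε.ne']
      exact le_self_add

theorem eLpNorm_two_eq_ofReal_sqrt {X F : Type*} [MeasurableSpace X] [NormedAddCommGroup F]
    {μ : Measure X} {f : X → F} (hf : MemLp f 2 μ) :
    eLpNorm f 2 μ = ENNReal.ofReal √(∫ x, ‖f x‖ ^ 2 ∂μ) := by
  simp [hf.eLpNorm_eq_integral_rpow_norm two_ne_zero ENNReal.ofNat_ne_top, Real.sqrt_eq_rpow]

section Rellich

variable {E 𝕜 : Type*} [NormedAddCommGroup E] [NormedSpace ℝ E] [FiniteDimensional ℝ E]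
  [MeasurableSpace E] [BorelSpace E] [RCLike 𝕜] {μ : Measure E} [μ.IsAddHaarMeasure]
  {f : ℕ → E → 𝕜}

theorem exists_subseq_cauchySeq_of_eLpNorm_fderiv_le (hf : ∀ n, ContDiff ℝ 1 (f n))
    (hf₂ : ∀ n, MemLp (f n) 2 μ) {C₀ C₁ C₂ : ℝ≥0} (hC₀ : ∀ n, eLpNorm (f n) 2 μ ≤ C₀)
    (hC₁ : ∀ n, eLpNorm (fderiv ℝ (f n)) 2 μ ≤ C₁)
    (hC₂ : ∀ n, eLpNorm (fun x ↦ ‖x‖ • f n x) 2 μ ≤ C₂) :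
    ∃ φ : ℕ → ℕ, StrictMono φ ∧ CauchySeq fun n ↦ (hf₂ (φ n)).toLp := by
  have : ProperSpace E := FiniteDimensional.proper_real E
  refine exists_subseq_cauchySeq_of_unifTight hf₂ (C := C₀)
    (fun n ↦ by simpa [Lp.norm_toLp] using ENNReal.toReal_mono ENNReal.coe_ne_top (hC₀ n))
    (unifTight_of_eLpNorm_norm_smul_le hC₂) fun ε hε ↦ ?_
  have hlim : Tendsto (fun h : E ↦ ‖h‖ₑ * C₁) (𝓝 0) (𝓝 0) := by
    simpa using ENNReal.Tendsto.mul_const (continuous_enorm.tendsto (0 : E))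
      (.inr (ENNReal.coe_ne_top (r := C₁)))
  filter_upwards [hlim.eventually_le_const hε] with h hh n
  calc eLpNorm (fun x ↦ f n (x + h) - f n x) 2 μ ≤ ‖h‖ₑ * eLpNorm (fderiv ℝ (f n)) 2 μ :=
        eLpNorm_comp_add_right_sub_le one_le_two ENNReal.ofNat_ne_top (hf n) h
    _ ≤ ‖h‖ₑ * C₁ := by gcongr; exact hC₁ n
    _ ≤ ε := hh

theorem exists_subseq_integral_norm_sub_sq_le_of_integral_norm_fderiv_sq_le
    (hf : ∀ n, ContDiff ℝ 1 (f n)) (hfc : ∀ n, HasCompactSupport (f n)) {C₀ C₁ C₂ : ℝ}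
    (hC₀ : ∀ n, ∫ x, ‖f n x‖ ^ 2 ∂μ ≤ C₀) (hC₁ : ∀ n, ∫ x, ‖fderiv ℝ (f n) x‖ ^ 2 ∂μ ≤ C₁)
    (hC₂ : ∀ n, ∫ x, ‖x‖ ^ 2 * ‖f n x‖ ^ 2 ∂μ ≤ C₂) :
    ∃ φ : ℕ → ℕ, StrictMono φ ∧ ∀ ε > 0, ∃ K, ∀ m ≥ K, ∀ n ≥ K,
      ∫ x, ‖f (φ m) x - f (φ n) x‖ ^ 2 ∂μ ≤ ε := by
  have hf₂ n : MemLp (f n) 2 μ := (hf n).continuous.memLp_of_hasCompactSupport (hfc n)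
  have hf'₂ n : MemLp (fderiv ℝ (f n)) 2 μ :=
    ((hf n).continuous_fderiv one_ne_zero).memLp_of_hasCompactSupport ((hfc n).fderiv ℝ)
  have hxf₂ n : MemLp (fun x ↦ ‖x‖ • f n x) 2 μ :=
    (continuous_norm.smul (hf n).continuous).memLp_of_hasCompactSupport (hfc n).smul_left
  obtain ⟨φ, hφ, hcauchy⟩ := exists_subseq_cauchySeq_of_eLpNorm_fderiv_le hf hf₂
    (C₀ := (√C₀).toNNReal) (C₁ := (√C₁).toNNReal) (C₂ := (√C₂).toNNReal)
    (fun n ↦ (eLpNorm_two_eq_ofReal_sqrt (hf₂ n)).trans_le <|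
      ENNReal.ofReal_le_ofReal <| Real.sqrt_le_sqrt (hC₀ n))
    (fun n ↦ (eLpNorm_two_eq_ofReal_sqrt (hf'₂ n)).trans_le <|
      ENNReal.ofReal_le_ofReal <| Real.sqrt_le_sqrt (hC₁ n))
    (fun n ↦ (eLpNorm_two_eq_ofReal_sqrt (hxf₂ n)).trans_le <|
      ENNReal.ofReal_le_ofReal <| Real.sqrt_le_sqrt <| by
        simpa [norm_smul, mul_pow] using hC₂ n)
  refine ⟨φ, hφ, fun ε hε ↦ ?_⟩
  obtain ⟨K, hK⟩ := EMetric.cauchySeq_iff.1 hcauchy (ENNReal.ofReal √ε) (by simpa)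
  refine ⟨K, fun m hm n hn ↦ ?_⟩
  have hmn := hK m hm n hn
  rw [Lp.edist_toLp_toLp, eLpNorm_two_eq_ofReal_sqrt ((hf₂ _).sub (hf₂ _)),
    ENNReal.ofReal_lt_ofReal_iff (Real.sqrt_pos.2 hε)] at hmn
  exact ((Real.sqrt_lt_sqrt_iff (by positivity)).1 hmn).le

end Rellich

section RadialDerivative

variable {E F : Type*} [NormedAddCommGroup E] [NormedSpace ℝ E] [MeasurableSpace E] [BorelSpace E]
  [NormedAddCommGroup F] [NormedSpace ℝ F] {μ : Measure E} {f : E → F}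

theorem integrable_fderiv_apply_self [IsFiniteMeasureOnCompacts μ] (hf : ContDiff ℝ 1 f)
    (hfc : HasCompactSupport f) : Integrable (fun x ↦ fderiv ℝ f x x) μ := by
  have := hf.continuous_fderiv one_ne_zero
  exact (by fun_prop : Continuous _).integrable_of_hasCompactSupport
    ((hfc.fderiv ℝ).mono fun x ↦ mt fun hx ↦ by simp [hx])

theorem integral_fderiv_apply_self [FiniteDimensional ℝ E] [μ.IsAddHaarMeasure]
    (hf : ContDiff ℝ 1 f) (hfc : HasCompactSupport f) :
    ∫ x, fderiv ℝ f x x ∂μ = -(Module.finrank ℝ E : ℝ) • ∫ x, f x ∂μ := by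
  let b := Module.finBasis ℝ E
  let c i : E →L[ℝ] ℝ := (b.coord i).toContinuousLinearMap
  have : Continuous (fderiv ℝ f) := hf.continuous_fderiv one_ne_zero
  have hint i : Integrable (fun x ↦ c i x • fderiv ℝ f x (b i)) μ :=
    (by fun_prop : Continuous _).integrable_of_hasCompactSupport
      ((hfc.fderiv_apply ℝ (b i)).smul_left)
  have hparts i : ∫ x, c i x • fderiv ℝ f x (b i) ∂μ = -∫ x, f x ∂μ := by
    have hf_int : Integrable f μ := hf.continuous.integrable_of_hasCompactSupport hfc
    have hcf : Integrable (fun x ↦ c i x • f x) μ :=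
      ((c i).continuous.smul hf.continuous).integrable_of_hasCompactSupport hfc.smul_left
    have hci : c i (b i) = 1 := by simp [c]
    rw [integral_smul_fderiv_eq_neg_fderiv_smul_of_integrable (by simpa [hci]) (hint i) hcf
      (fun x _ ↦ (c i).differentiableAt) (fun x _ ↦ hf.differentiable one_ne_zero x)]
    simp [hci]
  have hexpand (x : E) : fderiv ℝ f x x = ∑ i, c i x • fderiv ℝ f x (b i) :=
    calc fderiv ℝ f x x = fderiv ℝ f x (∑ i, c i x • b i) := by simp [c]
      _ = ∑ i, c i x • fderiv ℝ f x (b i) := by simp only [map_sum, map_smul]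
  simp only [hexpand]
  rw [integral_finsetSum _ fun i _ ↦ hint i]
  simp [hparts, Nat.cast_smul_eq_nsmul]

end RadialDerivative

theorem norm_sub_smul_innerSL_sq {E : Type*} [NormedAddCommGroup E] [InnerProductSpace ℝ E]
    [CompleteSpace E] (ℓ : StrongDual ℝ E) (c : ℝ) (x : E) :
    ‖ℓ - c • innerSL ℝ x‖ ^ 2 = ‖ℓ‖ ^ 2 - 2 * c * ℓ x + c ^ 2 * ‖x‖ ^ 2 := by
  obtain ⟨y, rfl⟩ := (InnerProductSpace.toDual ℝ E).surjective ℓ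
  have hx : innerSL ℝ x = InnerProductSpace.toDual ℝ E x := rfl
  have hsub : InnerProductSpace.toDual ℝ E y - c • InnerProductSpace.toDual ℝ E x =
      InnerProductSpace.toDual ℝ E (y - c • x) := by simp
  rw [hx, hsub, LinearIsometryEquiv.norm_map, LinearIsometryEquiv.norm_map, norm_sub_sq_real,
    InnerProductSpace.toDual_apply_apply, inner_smul_right, norm_smul, mul_pow, norm_eq_abs, sq_abs]
  ring

section GaussianTwist

section NormedAddCommGroup

variable {E : Type*} [NormedAddCommGroup E] {u : E → ℝ}

/-- The ground-state transform `u ↦ e^{-a|x|²/2} u`, an isometry from the `L²` space with weight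
`e^{-a|x|²}` to the unweighted one. -/
def gaussianTwist (a : ℝ) (u : E → ℝ) (x : E) : ℝ :=
  exp (-(a / 2) * ‖x‖ ^ 2) * u x

theorem exp_neg_half_mul_sq (a t : ℝ) : exp (-(a / 2) * t) ^ 2 = exp (-a * t) := by
  rw [← exp_nat_mul]
  ring_nf

theorem gaussianTwist_sq (a : ℝ) (u : E → ℝ) (x : E) :
    gaussianTwist a u x ^ 2 = u x ^ 2 * exp (-a * ‖x‖ ^ 2) := by
  rw [gaussianTwist, mul_pow, exp_neg_half_mul_sq, mul_comm]

theorem gaussianTwist_sub (a : ℝ) (u w : E → ℝ) (x : E) :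
    gaussianTwist a (u - w) x = gaussianTwist a u x - gaussianTwist a w x :=
  mul_sub ..

theorem hasCompactSupport_gaussianTwist (a : ℝ) (hu : HasCompactSupport u) :
    HasCompactSupport (gaussianTwist a u) :=
  hu.mul_left

variable [MeasurableSpace E] [BorelSpace E] {μ : Measure E} [IsFiniteMeasureOnCompacts μ]

theorem integrable_norm_sq_mul_exp {F : Type*} [NormedAddCommGroup F] {f : E → F}
    (hf : Continuous f) (hfc : HasCompactSupport f) (a : ℝ) :
    Integrable (fun x ↦ ‖f x‖ ^ 2 * exp (-a * ‖x‖ ^ 2)) μ :=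
  (by fun_prop : Continuous _).integrable_of_hasCompactSupport
    (hfc.norm.comp_left (g := (· ^ 2)) (by simp)).mul_right

variable [NormedSpace ℝ E] {a : ℝ}

theorem integral_norm_fderiv_sq_add_sq_mul_exp (hu : ContDiff ℝ 1 u) (huc : HasCompactSupport u) :
    ∫ x, (‖fderiv ℝ u x‖ ^ 2 + u x ^ 2) * exp (-a * ‖x‖ ^ 2) ∂μ =
      ∫ x, ‖fderiv ℝ u x‖ ^ 2 * exp (-a * ‖x‖ ^ 2) ∂μ + ∫ x, gaussianTwist a u x ^ 2 ∂μ := by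
  simp only [gaussianTwist_sq, add_mul]
  exact integral_add
    (integrable_norm_sq_mul_exp (hu.continuous_fderiv one_ne_zero) (huc.fderiv ℝ) a)
    (by simpa using integrable_norm_sq_mul_exp hu.continuous huc a)

theorem integral_gaussianTwist_sq_le (hu : ContDiff ℝ 1 u) (huc : HasCompactSupport u) :
    ∫ x, gaussianTwist a u x ^ 2 ∂μ ≤
      ∫ x, (‖fderiv ℝ u x‖ ^ 2 + u x ^ 2) * exp (-a * ‖x‖ ^ 2) ∂μ := by
  rw [integral_norm_fderiv_sq_add_sq_mul_exp hu huc]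
  exact le_add_of_nonneg_left (by positivity)

end NormedAddCommGroup

variable {E : Type*} [NormedAddCommGroup E] [InnerProductSpace ℝ E] {a : ℝ} {u : E → ℝ}

theorem contDiff_gaussianTwist {n : WithTop ℕ∞} (a : ℝ) (hu : ContDiff ℝ n u) :
    ContDiff ℝ n (gaussianTwist a u) :=
  (contDiff_const.mul (contDiff_norm_sq ℝ)).exp.mul hu

theorem hasFDerivAt_gaussianTwist {u' : StrongDual ℝ E} {x : E} (hu : HasFDerivAt u u' x) :
    HasFDerivAt (gaussianTwist a u)
      (exp (-(a / 2) * ‖x‖ ^ 2) • u' - (a * gaussianTwist a u x) • innerSL ℝ x) x := by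
  have hexp := ((hasStrictFDerivAt_norm_sq x).hasFDerivAt.const_mul (-(a / 2))).exp
  refine (hexp.mul hu).congr_fderiv ?_
  ext y
  simp [gaussianTwist]
  ring

theorem norm_fderiv_gaussianTwist_sq_add [CompleteSpace E] (hu : Differentiable ℝ u) (x : E) :
    ‖fderiv ℝ (gaussianTwist a u) x‖ ^ 2 + a ^ 2 * (‖x‖ ^ 2 * gaussianTwist a u x ^ 2) =
      ‖fderiv ℝ u x‖ ^ 2 * exp (-a * ‖x‖ ^ 2) -
        a * fderiv ℝ (fun y ↦ gaussianTwist a u y ^ 2) x x := by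
  have hv := hasFDerivAt_gaussianTwist (a := a) (hu x).hasFDerivAt
  rw [(hv.pow 2).fderiv, hv.fderiv, norm_sub_smul_innerSL_sq, norm_smul, mul_pow, norm_eq_abs,
    abs_exp, exp_neg_half_mul_sq]
  simp
  ring

variable [FiniteDimensional ℝ E] [MeasurableSpace E] [BorelSpace E] {μ : Measure E}
  [μ.IsAddHaarMeasure]

-- For `a = 1/4` on `ℝᴺ`, dropping the first term and multiplying by `a⁻² = 16` is the estimate
-- `∫ |x|² v² ≤ 16 ∫ |∇u|² e^{-|x|²/4} + 4N ∫ v²`.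
theorem integral_norm_fderiv_gaussianTwist_sq_add (hu : ContDiff ℝ 1 u)
    (huc : HasCompactSupport u) :
    ∫ x, ‖fderiv ℝ (gaussianTwist a u) x‖ ^ 2 ∂μ +
        a ^ 2 * ∫ x, ‖x‖ ^ 2 * gaussianTwist a u x ^ 2 ∂μ =
      ∫ x, ‖fderiv ℝ u x‖ ^ 2 * exp (-a * ‖x‖ ^ 2) ∂μ +
        a * Module.finrank ℝ E * ∫ x, gaussianTwist a u x ^ 2 ∂μ := by
  have hv := contDiff_gaussianTwist a hu
  have hvc := hasCompactSupport_gaussianTwist a huc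
  have hvv : ContDiff ℝ 1 fun x ↦ gaussianTwist a u x ^ 2 := hv.pow 2
  have hvvc : HasCompactSupport fun x ↦ gaussianTwist a u x ^ 2 :=
    hvc.comp_left (g := (· ^ 2)) (by simp)
  have hDv : Integrable (fun x ↦ ‖fderiv ℝ (gaussianTwist a u) x‖ ^ 2) μ := by
    simpa using integrable_norm_sq_mul_exp (hv.continuous_fderiv one_ne_zero) (hvc.fderiv ℝ) 0
  have hxv : Integrable (fun x ↦ ‖x‖ ^ 2 * gaussianTwist a u x ^ 2) μ := by
    have := hvv.continuous
    exact (by fun_prop : Continuous _).integrable_of_hasCompactSupport hvvc.mul_left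
  have hDu := integrable_norm_sq_mul_exp (μ := μ) (hu.continuous_fderiv one_ne_zero)
    (huc.fderiv ℝ) a
  rw [← integral_const_mul, ← integral_add hDv (hxv.const_mul _)]
  simp only [norm_fderiv_gaussianTwist_sq_add (hu.differentiable one_ne_zero)]
  rw [integral_sub hDu ((integrable_fderiv_apply_self hvv hvvc).const_mul a), integral_const_mul,
    integral_fderiv_apply_self hvv hvvc, smul_eq_mul]
  ring

theorem integral_norm_fderiv_gaussianTwist_sq_add_le (hu : ContDiff ℝ 1 u)
    (huc : HasCompactSupport u) :
    ∫ x, ‖fderiv ℝ (gaussianTwist a u) x‖ ^ 2 ∂μ +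
        a ^ 2 * ∫ x, ‖x‖ ^ 2 * gaussianTwist a u x ^ 2 ∂μ ≤
      (1 + |a| * Module.finrank ℝ E) *
        ∫ x, (‖fderiv ℝ u x‖ ^ 2 + u x ^ 2) * exp (-a * ‖x‖ ^ 2) ∂μ := by
  have hDu : ∫ x, ‖fderiv ℝ u x‖ ^ 2 * exp (-a * ‖x‖ ^ 2) ∂μ ≤
      ∫ x, (‖fderiv ℝ u x‖ ^ 2 + u x ^ 2) * exp (-a * ‖x‖ ^ 2) ∂μ := by
    rw [integral_norm_fderiv_sq_add_sq_mul_exp hu huc]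
    exact le_add_of_nonneg_right (by positivity)
  rw [integral_norm_fderiv_gaussianTwist_sq_add hu huc, one_add_mul]
  exact add_le_add hDu (mul_le_mul (mul_le_mul_of_nonneg_right (le_abs_self a) (by positivity))
    (integral_gaussianTwist_sq_le hu huc) (by positivity) (by positivity))

end GaussianTwist

theorem gaussian_compact_embedding_general {E : Type*} [NormedAddCommGroup E]
    [InnerProductSpace ℝ E] [FiniteDimensional ℝ E] [MeasurableSpace E] [BorelSpace E]
    (μ : Measure E) [μ.IsAddHaarMeasure] {a : ℝ} (ha : a ≠ 0) (u : ℕ → E → ℝ)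
    (hu : ∀ n, ContDiff ℝ 1 (u n)) (huc : ∀ n, HasCompactSupport (u n)) (M : ℝ)
    (hM : ∀ n, ∫ x, (‖fderiv ℝ (u n) x‖ ^ 2 + u n x ^ 2) * exp (-a * ‖x‖ ^ 2) ∂μ ≤ M) :
    ∃ φ : ℕ → ℕ, StrictMono φ ∧ ∀ ε > 0, ∃ K, ∀ m ≥ K, ∀ n ≥ K,
      ∫ x, (u (φ m) x - u (φ n) x) ^ 2 * exp (-a * ‖x‖ ^ 2) ∂μ ≤ ε := by
  have henergy n := (integral_norm_fderiv_gaussianTwist_sq_add_le (hu n) (huc n)).trans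
    (mul_le_mul_of_nonneg_left (hM n) (by positivity))
  obtain ⟨φ, hφ, hcauchy⟩ := exists_subseq_integral_norm_sub_sq_le_of_integral_norm_fderiv_sq_le
    (μ := μ) (C₀ := M) (C₁ := (1 + |a| * Module.finrank ℝ E) * M)
    (C₂ := (a ^ 2)⁻¹ * ((1 + |a| * Module.finrank ℝ E) * M))
    (fun n ↦ contDiff_gaussianTwist a (hu n)) (fun n ↦ hasCompactSupport_gaussianTwist a (huc n))
    (fun n ↦ by simpa using (integral_gaussianTwist_sq_le (hu n) (huc n)).trans (hM n))
    (fun n ↦ (le_add_of_nonneg_right (by positivity)).trans (henergy n))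
    (fun n ↦ by
      simpa [le_inv_mul_iff₀ (show 0 < a ^ 2 by positivity)] using
        (le_add_of_nonneg_left (by positivity)).trans (henergy n))
  refine ⟨φ, hφ, ?_⟩
  simpa only [← gaussianTwist_sub, norm_eq_abs, sq_abs, gaussianTwist_sq, Pi.sub_apply]
    using hcauchy

/-- Compactness of the embedding `H ↪ L`: every sequence of smooth compactly supported
functions bounded in the Gaussian-weighted `H¹` norm admits a subsequence which is Cauchy
in the Gaussian-weighted `L²` norm. -/
theorem gaussian_compact_embedding {N : ℕ} (hN : 1 ≤ N)
    (u : ℕ → EuclideanSpace ℝ (Fin N) → ℝ)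
    (hsm : ∀ n, ContDiff ℝ (⊤ : ℕ∞) (u n)) (hsupp : ∀ n, HasCompactSupport (u n))
    (M : ℝ)
    (hbdd : ∀ n, ∫ x, (‖gradient (u n) x‖ ^ 2 + (u n x) ^ 2) * Real.exp (-‖x‖ ^ 2 / 4) ≤ M) :
    ∃ φ : ℕ → ℕ, StrictMono φ ∧
      ∀ ε > (0 : ℝ), ∃ K : ℕ, ∀ m ≥ K, ∀ n ≥ K,
        ∫ x, (u (φ m) x - u (φ n) x) ^ 2 * Real.exp (-‖x‖ ^ 2 / 4) ≤ ε := by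
  have hweight (t : ℝ) : -t / 4 = -4⁻¹ * t := by ring
  simp only [gradient, LinearIsometryEquiv.norm_map, hweight] at hbdd ⊢
  exact gaussian_compact_embedding_general volume (by norm_num) u
    (fun n ↦ (hsm n).of_le (by simp)) hsupp M hbdd
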